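/- Let q = (q(n)) be an increasing sequence of positive reals and δ = (δ(n)) an increasing unbounded sequence of positive reals such that the sequence (δ(n)^{1/q(n)}) is bounded. Then BV(q;δ) coincides with the space of all bounded functions f : [0,1] → ℝ. More precisely, if |f(x)| ≤ C for all x ∈ [0,1], then for every n and every family {I_k}_{k=1}^{s} of nonoverlapping subintervals of [0,1] with each |I_k| ≥ 1/δ(n), one has (∑_{k=1}^{s} |f(I_k)|^{q(n)})^{1/q(n)} ≤ 2C·δ(n)^{1/q(n)}, so f ∈ BV(q;δ); and conversely every f ∈ BV(q;δ) is bounded. -/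

import Mathlib

open scoped ENNReal
open Filter

/-- A finite family of nonoverlapping subintervals of `[0,1]`, each given as its pair of
endpoints: every interval is nondegenerate, contained in `[0,1]`, and any two of them
have disjoint interiors. -/
def Nonoverlapping (n : ℕ) (I : Fin n → ℝ × ℝ) : Prop :=
  (∀ i, 0 ≤ (I i).1 ∧ (I i).1 < (I i).2 ∧ (I i).2 ≤ 1) ∧
    ∀ i j, i ≠ j → (I i).2 ≤ (I j).1 ∨ (I j).2 ≤ (I i).1

/-- The generalized Wiener variation `V(f, q; δ)`, as a value in `ℝ≥0∞`. -/
noncomputable def wienerVar (q δ : ℕ → ℝ) (f : ℝ → ℝ) : ℝ≥0∞ :=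
  ⨆ (n : ℕ) (s : ℕ) (I : Fin s → ℝ × ℝ) (_ : Nonoverlapping s I)
    (_ : ∀ k, 1 / δ n ≤ (I k).2 - (I k).1),
    ENNReal.ofReal ((∑ k, |f (I k).2 - f (I k).1| ^ q n) ^ (1 / q n))

theorem sum_len_le (s : ℕ) (I : Fin s → ℝ × ℝ) (h : Nonoverlapping s I) :
    ∑ k, ((I k).2 - (I k).1) ≤ 1 := by
  have hd : Pairwise (Function.onFun Disjoint fun k => Set.Ioo (I k).1 (I k).2) := by
    intro i j hij
    rw [Function.onFun, Set.disjoint_left]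
    intro x hx hy
    rcases h.2 i j hij with h1 | h1
    · linarith [hx.2, hy.1]
    · linarith [hx.1, hy.2]
  have hm : MeasureTheory.volume (⋃ k, Set.Ioo (I k).1 (I k).2)
      ≤ MeasureTheory.volume (Set.Icc (0 : ℝ) 1) := by
    apply MeasureTheory.measure_mono
    apply Set.iUnion_subset
    intro k x hx
    obtain ⟨h0, _, h1⟩ := h.1 k
    exact ⟨by linarith [hx.1], by linarith [hx.2]⟩
  rw [MeasureTheory.measure_iUnion hd (fun k => measurableSet_Ioo), tsum_fintype] at hm
  simp only [Real.volume_Ioo, Real.volume_Icc] at hm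
  rw [← ENNReal.ofReal_sum_of_nonneg (fun k _ => by linarith [(h.1 k).2.1])] at hm
  have := (ENNReal.ofReal_le_ofReal_iff (by norm_num)).1 hm
  linarith

/-- If the sequence `δ(n)^{1/q(n)}` is bounded, then `BV(q;δ)` is exactly the class of
bounded functions on `[0,1]`: if `|f| ≤ C` on `[0,1]` then every admissible sum satisfies
`(∑_k |f(I_k)|^{q(n)})^{1/q(n)} ≤ 2·C·δ(n)^{1/q(n)}`, whence `f ∈ BV(q;δ)`; conversely,
every `f ∈ BV(q;δ)` is bounded on `[0,1]`. -/
theorem wiener_class_eq_bounded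
    (q δ : ℕ → ℝ)
    (hqpos : ∀ n, 0 < q n) (hq : StrictMono q)
    (hδpos : ∀ n, 0 < δ n) (hδ : StrictMono δ)
    (hδunbdd : Tendsto δ atTop atTop)
    (hbdd : ∃ B : ℝ, ∀ n, δ n ^ (1 / q n) ≤ B) :
    (∀ f : ℝ → ℝ, ∀ C : ℝ, (∀ x ∈ Set.Icc (0 : ℝ) 1, |f x| ≤ C) →
      (∀ (n s : ℕ) (I : Fin s → ℝ × ℝ), Nonoverlapping s I →
          (∀ k, 1 / δ n ≤ (I k).2 - (I k).1) →
          (∑ k, |f (I k).2 - f (I k).1| ^ q n) ^ (1 / q n) ≤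
            2 * C * δ n ^ (1 / q n)) ∧
        wienerVar q δ f < ⊤) ∧
    (∀ f : ℝ → ℝ, wienerVar q δ f < ⊤ →
      ∃ C : ℝ, ∀ x ∈ Set.Icc (0 : ℝ) 1, |f x| ≤ C) := by
  constructor
  · intro f C hC
    have hC0 : 0 ≤ C := (abs_nonneg _).trans (hC 0 (by simp))
    have key : ∀ (n s : ℕ) (I : Fin s → ℝ × ℝ), Nonoverlapping s I →
          (∀ k, 1 / δ n ≤ (I k).2 - (I k).1) →
          (∑ k, |f (I k).2 - f (I k).1| ^ q n) ^ (1 / q n) ≤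
            2 * C * δ n ^ (1 / q n) := by
      intro n s I hI hl
      have hs : (s : ℝ) ≤ δ n := by
        have h1 : ∑ _k : Fin s, 1 / δ n ≤ 1 :=
          (Finset.sum_le_sum fun k _ => hl k).trans (sum_len_le s I hI)
        simp only [Finset.sum_const, Finset.card_univ, Fintype.card_fin, nsmul_eq_mul] at h1
        rw [mul_one_div, div_le_one (hδpos n)] at h1
        exact h1
      have h2 : ∑ k, |f (I k).2 - f (I k).1| ^ q n ≤ δ n * (2 * C) ^ q n := by
        calc ∑ k, |f (I k).2 - f (I k).1| ^ q n ≤ ∑ _k : Fin s, (2 * C) ^ q n := by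
              apply Finset.sum_le_sum
              intro k _
              apply Real.rpow_le_rpow (abs_nonneg _) _ (hqpos n).le
              obtain ⟨ha, hb, hc⟩ := hI.1 k
              have e1 := hC (I k).2 ⟨by linarith, hc⟩
              have e2 := hC (I k).1 ⟨ha, by linarith⟩
              have := abs_sub (f (I k).2) (f (I k).1)
              linarith
          _ = s * (2 * C) ^ q n := by simp
          _ ≤ _ := by gcongr
      have hq0 := hqpos n
      have hd0 := hδpos n
      calc _ ≤ (δ n * (2 * C) ^ q n) ^ (1 / q n) := by
            apply Real.rpow_le_rpow _ h2 (by positivity)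
            positivity
        _ = _ := by
            rw [Real.mul_rpow hd0.le (by positivity), ← Real.rpow_mul (by positivity),
              mul_one_div_cancel hq0.ne', Real.rpow_one, mul_comm]
    refine ⟨key, ?_⟩
    obtain ⟨B, hB⟩ := hbdd
    refine lt_of_le_of_lt ?_ (ENNReal.ofReal_lt_top (r := 2 * C * B))
    unfold wienerVar
    refine iSup_le fun n => iSup_le fun s => iSup_le fun I => iSup_le fun hI => iSup_le fun hl => ?_
    apply ENNReal.ofReal_le_ofReal
    exact (key n s I hI hl).trans (mul_le_mul_of_nonneg_left (hB n) (by positivity))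
  · intro f hf
    obtain ⟨n, hn⟩ := (hδunbdd.eventually_ge_atTop 2).exists
    have hinv : 1 / δ n ≤ 1 / 2 := one_div_le_one_div_of_le (by norm_num) hn
    have key : ∀ a b : ℝ, 0 ≤ a → b ≤ 1 → 1 / 2 ≤ b - a →
        |f b - f a| ≤ (wienerVar q δ f).toReal := by
      intro a b ha hb hab
      have hle : ENNReal.ofReal ((∑ k : Fin 1, |f ((fun _ : Fin 1 => (a, b)) k).2
          - f ((fun _ : Fin 1 => (a, b)) k).1| ^ q n) ^ (1 / q n)) ≤ wienerVar q δ f := by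
        unfold wienerVar
        refine le_iSup_of_le n (le_iSup_of_le 1 (le_iSup_of_le (fun _ => (a, b))
          (le_iSup_of_le ?_ (le_iSup_of_le ?_ le_rfl))))
        · refine ⟨fun i => ⟨ha, ?_, hb⟩, fun i j hij => absurd (Subsingleton.elim i j) hij⟩
          show a < b
          linarith
        · intro k
          show 1 / δ n ≤ b - a
          linarith
      simp only [Finset.univ_unique, Finset.sum_singleton] at hle
      rw [← Real.rpow_mul (abs_nonneg _), mul_one_div_cancel (hqpos n).ne', Real.rpow_one] at hle
      exact (ENNReal.ofReal_le_iff_le_toReal hf.ne).1 hle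
    refine ⟨|f 0| + |f 1| + (wienerVar q δ f).toReal, fun x hx => ?_⟩
    have p0 := abs_nonneg (f 0)
    have p1 := abs_nonneg (f 1)
    rcases le_total (1 / 2) x with h | h
    · have := key 0 x le_rfl hx.2 (by linarith)
      have := abs_sub_abs_le_abs_sub (f x) (f 0)
      linarith
    · have := key x 1 hx.1 le_rfl (by linarith)
      have := abs_sub_abs_le_abs_sub (f x) (f 1)
      rw [abs_sub_comm (f x)] at this
      linarith
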